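/- Let Y_1, …, Y_n be i.i.d. random vectors in ℝ^p with E[Y_1] = 0 and covariance matrix I_p, where p ≤ n, and suppose E[Y_{1j}⁴] ≤ C for all coordinates j, for a constant C. Fix γ ⊆ {1,…,p} with p_γ = |γ| and a vector G ∈ ℝ^p. With T_k = Σ_{i=1}^k Y_i, T_{k,γ} the coordinate restriction of T_k to γ, S_k = ‖T_k‖² − ‖T_{k,γ}‖² + 2n GᵀT_k − k(p − p_γ), and martingale differences D_k = S_k − S_{k−1}, there is a constant C' depending only on C such that Σ_{k=1}^n E[D_k²] ≤ C'(n²p + n³‖G‖²). -/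

import Mathlib

open MeasureTheory ProbabilityTheory Filter

/-- Partial sum `T_k = Σ_{i ≤ k} Y_i` of the first `k` of `n` random vectors in `ℝ^p`,
realized on the canonical product space. -/
noncomputable def partialSumVec (n p : ℕ) (k : ℕ) (ω : Fin n → Fin p → ℝ) (j : Fin p) : ℝ :=
  ∑ i : Fin n, if (i : ℕ) < k then ω i j else 0

/-- The statistic `S_k = ‖T_k‖² − ‖T_{k,γ}‖² + 2n GᵀT_k − k(p − |γ|)` from the proof of
Lemma 3, where `T_{k,γ}` is the coordinate restriction of `T_k` to the model `γ`. -/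
noncomputable def quadStat (n p : ℕ) (γ : Finset (Fin p)) (G : Fin p → ℝ) (k : ℕ)
    (ω : Fin n → Fin p → ℝ) : ℝ :=
  (∑ j, (partialSumVec n p k ω j) ^ 2)
    - (∑ j, (if j ∈ γ then partialSumVec n p k ω j else 0) ^ 2)
    + 2 * n * (∑ j, G j * partialSumVec n p k ω j) - (k : ℝ) * ((p : ℝ) - γ.card)

lemma int3 {Ω : Type*} [MeasurableSpace Ω] (P : Measure Ω) (f g h : Ω → ℝ) (a b c : ℝ)
    (hf : Integrable f P) (hg : Integrable g P) (hh : Integrable h P) :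
    ∫ ω, (a * f ω + b * g ω + c * h ω) ∂P
      = a * ∫ ω, f ω ∂P + b * ∫ ω, g ω ∂P + c * ∫ ω, h ω ∂P := by
  have h1 : Integrable (fun ω => a * f ω + b * g ω) P := (hf.const_mul a).add (hg.const_mul b)
  rw [integral_add h1 (hh.const_mul c), integral_add (hf.const_mul a) (hg.const_mul b),
    integral_const_mul, integral_const_mul, integral_const_mul]

lemma quad_int {Ω ι : Type*} [MeasurableSpace Ω] [Fintype ι] [DecidableEq ι] (P : Measure Ω)
    (X : ι → Ω → ℝ) (v c : ι → ℝ)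
    (hI : ∀ j l, Integrable (fun ω => X j ω * X l ω) P)
    (h : ∀ j l, ∫ ω, X j ω * X l ω ∂P = if j = l then v j else 0) :
    Integrable (fun ω => (∑ j, c j * X j ω) ^ 2) P ∧
      ∫ ω, (∑ j, c j * X j ω) ^ 2 ∂P = ∑ j, (c j) ^ 2 * v j := by
  have e : (fun ω => (∑ j, c j * X j ω) ^ 2)
      = fun ω => ∑ j, ∑ l, (c j * c l) * (X j ω * X l ω) := by
    funext ω
    rw [sq, Finset.sum_mul_sum]
    refine Finset.sum_congr rfl fun j _ => Finset.sum_congr rfl fun l _ => by ring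
  have hI2 : ∀ j l, Integrable (fun ω => (c j * c l) * (X j ω * X l ω)) P :=
    fun j l => (hI j l).const_mul _
  rw [e]
  refine ⟨integrable_finsetSum _ fun j _ => integrable_finsetSum _ fun l _ => hI2 j l, ?_⟩
  rw [integral_finsetSum _ fun j _ => integrable_finsetSum _ fun l _ => hI2 j l]
  refine Finset.sum_congr rfl fun j _ => ?_
  rw [integral_finsetSum _ fun l _ => hI2 j l]
  simp_rw [integral_const_mul, h]
  simp [sq]

lemma partialSum_succ (n p k : ℕ) (hk : k < n) (ω : Fin n → Fin p → ℝ) (j : Fin p) :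
    partialSumVec n p (k+1) ω j = partialSumVec n p k ω j + ω ⟨k, hk⟩ j := by
  unfold partialSumVec
  have : ω ⟨k, hk⟩ j = ∑ i : Fin n, if i = ⟨k, hk⟩ then ω i j else 0 := by simp
  rw [this, ← Finset.sum_add_distrib]
  refine Finset.sum_congr rfl fun i _ => ?_
  rcases lt_trichotomy (i : ℕ) k with h | h | h
  · have : i ≠ ⟨k, hk⟩ := fun h' => by simp [h'] at h
    simp [h, this, Nat.lt_succ_of_lt h]
  · have : i = ⟨k, hk⟩ := Fin.ext h
    simp [this]
  · have : i ≠ ⟨k, hk⟩ := fun h' => by simp [h'] at h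
    have h1 : ¬ (i : ℕ) < k := by omega
    have h2 : ¬ (i : ℕ) < k + 1 := by omega
    simp only [h1, h2, this, if_false, add_zero]

lemma diff_eq (n p k : ℕ) (hk : k < n) (γ : Finset (Fin p)) (G : Fin p → ℝ)
    (ω : Fin n → Fin p → ℝ) :
    quadStat n p γ G (k + 1) ω - quadStat n p γ G k ω =
      2 * (∑ j, (if j ∈ γ then 0 else 1) * (partialSumVec n p k ω j * ω ⟨k, hk⟩ j))
      + (∑ j, (if j ∈ γ then 0 else 1) * ((ω ⟨k, hk⟩ j) ^ 2 - 1))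
      + 2 * n * ∑ j, G j * ω ⟨k, hk⟩ j := by
  have hc : (p : ℝ) - γ.card = ∑ j : Fin p, (if j ∈ γ then (0 : ℝ) else 1) := by
    have : ∀ j : Fin p, (if j ∈ γ then (0 : ℝ) else 1) = 1 - if j ∈ γ then 1 else 0 := by
      intro j; split_ifs <;> simp
    simp [this]
  unfold quadStat
  rw [hc]
  simp_rw [partialSum_succ n p k hk]
  push_cast
  have : ∀ a b c d : ℝ, ∀ K N H : ℝ, ∀ e f : ℝ, a - b + N * e - (K + 1) * H - (c - d + N * f - K * H)
    = (a - b - c + d - H) + N * (e - f) := by intros; ring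
  rw [this]
  simp_rw [Finset.mul_sum]
  simp only [← Finset.sum_sub_distrib, ← Finset.sum_add_distrib, Finset.mul_sum]
  refine Finset.sum_congr rfl fun j _ => ?_
  split_ifs <;> ring

lemma one_bound (C : ℝ) (hC : 0 ≤ C) (n p k : ℕ) (hpn : p ≤ n) (hk : k < n)
    (μ : Measure (Fin p → ℝ)) [IsProbabilityMeasure μ]
    (h1 : ∀ j, Integrable (fun y => y j) μ)
    (h1' : ∀ j, ∫ y, y j ∂μ = 0)
    (h2 : ∀ j l, Integrable (fun y => y j * y l) μ)
    (h2' : ∀ j l, ∫ y, y j * y l ∂μ = if j = l then (1 : ℝ) else 0)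
    (h4 : ∀ j, Integrable (fun y => (y j) ^ 4) μ)
    (h4' : ∀ j, ∫ y, (y j) ^ 4 ∂μ ≤ C)
    (γ : Finset (Fin p)) (G : Fin p → ℝ) :
    ∫ ω, (quadStat n p γ G (k + 1) ω - quadStat n p γ G k ω) ^ 2
              ∂(Measure.pi fun _ : Fin n => μ)
      ≤ (12 + 3 * C) * (n * p + (n : ℝ) ^ 2 * ∑ j, (G j) ^ 2) := by
  set P := Measure.pi fun _ : Fin n => μ with hP
  have hmp : ∀ i : Fin n, MeasurePreserving (Function.eval i) P μ :=
    fun i => measurePreserving_eval (fun _ : Fin n => μ) i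
  have cI : ∀ (i : Fin n) (f : (Fin p → ℝ) → ℝ), Integrable f μ →
      Integrable (fun ω => f (ω i)) P := fun i f hf => (hmp i).integrable_comp_of_integrable hf
  have cE : ∀ (i : Fin n) (f : (Fin p → ℝ) → ℝ), Integrable f μ →
      ∫ ω, f (ω i) ∂P = ∫ y, f y ∂μ := by
    intro i f hf
    rw [← (hmp i).map_eq, integral_map (hmp i).aemeasurable
      (by rw [(hmp i).map_eq]; exact hf.aestronglyMeasurable)]
  have hind : iIndepFun (fun (i : Fin n) (ω : Fin n → Fin p → ℝ) => ω i) P :=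
    iIndepFun_pi (X := fun _ y => y) (fun i => aemeasurable_id)
  have hpI : ∀ (i i' : Fin n) (j l : Fin p), Integrable (fun ω => ω i j * ω i' l) P := by
    intro i i' j l
    by_cases h : i = i'
    · subst h; exact cI i _ (h2 j l)
    · have hi : IndepFun (fun ω : Fin n → Fin p → ℝ => ω i j) (fun ω => ω i' l) P :=
        (hind.indepFun h).comp (measurable_pi_apply j) (measurable_pi_apply l)
      exact hi.integrable_mul (cI i _ (h1 j)) (cI i' _ (h1 l))
  have hpE : ∀ (i i' : Fin n) (j : Fin p),
      ∫ ω, ω i j * ω i' j ∂P = if i = i' then 1 else 0 := by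
    intro i i' j
    by_cases h : i = i'
    · subst h; rw [cE i _ (h2 j j), h2']; simp
    · have hi : IndepFun (fun ω : Fin n → Fin p → ℝ => ω i j) (fun ω => ω i' j) P :=
        (hind.indepFun h).comp (measurable_pi_apply j) (measurable_pi_apply j)
      rw [hi.integral_fun_mul_eq_mul_integral (cI i _ (h1 j)).aestronglyMeasurable
        (cI i' _ (h1 j)).aestronglyMeasurable, cE i _ (h1 j), h1']
      simp [h]
  have hTeq : ∀ ω j, partialSumVec n p k ω j
      = ∑ i : Fin n, (if (i : ℕ) < k then (1 : ℝ) else 0) * ω i j := by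
    intro ω j; simp [partialSumVec]
  have hTI : ∀ j l, Integrable (fun ω => partialSumVec n p k ω j * partialSumVec n p k ω l) P := by
    intro j l
    simp_rw [hTeq, Finset.sum_mul_sum]
    refine integrable_finsetSum _ fun i _ => integrable_finsetSum _ fun i' _ => ?_
    refine ((hpI i i' j l).const_mul
      ((if (i : ℕ) < k then (1 : ℝ) else 0) * (if (i' : ℕ) < k then (1 : ℝ) else 0))).congr ?_
    exact Eventually.of_forall fun ω => by dsimp only; ring
  have hTE : ∀ j, ∫ ω, partialSumVec n p k ω j * partialSumVec n p k ω j ∂P ≤ n := by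
    intro j
    have := (quad_int P (fun (i : Fin n) ω => ω i j) (fun _ => 1)
      (fun i => if (i : ℕ) < k then (1 : ℝ) else 0) (fun i i' => hpI i i' j j)
      (fun i i' => hpE i i' j)).2
    simp_rw [← sq, hTeq, this]
    calc _ ≤ ∑ i : Fin n, (1 : ℝ) := by
          refine Finset.sum_le_sum fun i _ => ?_
          split_ifs <;> norm_num
      _ = n := by simp
  let κ : Fin n := ⟨k, hk⟩
  have hindT : ∀ j l, IndepFun (fun ω => partialSumVec n p k ω j * partialSumVec n p k ω l)
      (fun ω => ω κ j * ω κ l) P := by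
    intro j l
    have h0 := hind.indepFun_finset (Finset.univ.erase κ) {κ} (by simp)
      (fun i => measurable_pi_apply i)
    have hm : ∀ j, Measurable (fun y : (↥(Finset.univ.erase κ) → Fin p → ℝ) =>
        ∑ i : ↥(Finset.univ.erase κ), if ((i : Fin n) : ℕ) < k then y i j else 0) := by
      intro j
      refine Finset.measurable_fun_sum _ fun i _ => ?_
      split_ifs
      · fun_prop
      · fun_prop
    have hm2 : ∀ j, Measurable (fun y : (↥({κ} : Finset (Fin n)) → Fin p → ℝ) =>
        y ⟨κ, by simp⟩ j) := by
      intro j; fun_prop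
    have h3 := h0.comp ((hm j).mul (hm l)) ((hm2 j).mul (hm2 l))
    have hTs : ∀ ω : Fin n → Fin p → ℝ, ∀ j, partialSumVec n p k ω j
        = ∑ i : ↥(Finset.univ.erase κ), if ((i : Fin n) : ℕ) < k then ω i j else 0 := by
      intro ω j
      rw [Finset.sum_coe_sort (Finset.univ.erase κ)
        (fun i : Fin n => if (i : ℕ) < k then ω i j else 0)]
      rw [partialSumVec, ← Finset.add_sum_erase _ _ (Finset.mem_univ κ)]
      simp [κ]
    simp_rw [hTs]
    exact h3
  -- A
  have hA := quad_int P (fun (j : Fin p) ω => partialSumVec n p k ω j * ω κ j)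
    (fun j => ∫ ω, partialSumVec n p k ω j * partialSumVec n p k ω j ∂P)
    (fun j => if j ∈ γ then 0 else 1)
    (fun j l => by
      refine ((hindT j l).integrable_mul (hTI j l) (hpI κ κ j l)).congr ?_
      exact Eventually.of_forall fun ω => by simp only [Pi.mul_apply]; ring)
    (fun j l => by
      have := (hindT j l).integral_fun_mul_eq_mul_integral (hTI j l).aestronglyMeasurable
        (hpI κ κ j l).aestronglyMeasurable
      rw [cE κ _ (h2 j l), h2'] at this
      calc _ = _ := by
            refine integral_congr_ae (Eventually.of_forall fun ω => ?_)
            show _ = (partialSumVec n p k ω j * partialSumVec n p k ω l) * (ω κ j * ω κ l)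
            dsimp only; ring
        _ = _ := this
        _ = _ := by
          by_cases h : j = l
          · subst h; simp
          · simp [h])
  have hAle : ∫ ω, (∑ j, (if j ∈ γ then (0:ℝ) else 1) *
      (partialSumVec n p k ω j * ω κ j)) ^ 2 ∂P ≤ n * p := by
    rw [hA.2]
    calc _ ≤ ∑ j : Fin p, (n : ℝ) := by
          refine Finset.sum_le_sum fun j _ => ?_
          split_ifs
          · simp
          · simpa using hTE j
      _ = n * p := by simp [mul_comm]
  -- E
  have hE := quad_int P (fun (j : Fin p) ω => ω κ j) (fun _ => 1) G
    (fun j l => hpI κ κ j l) (fun j l => by rw [cE κ _ (h2 j l), h2'])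
  -- B
  have hqI : ∀ j, Integrable (fun y : Fin p → ℝ => ((y j) ^ 2 - 1) ^ 2) μ := by
    intro j
    refine (((h4 j).sub ((h2 j j).const_mul 2)).add (integrable_const 1)).congr ?_
    exact Eventually.of_forall fun ω => by simp only [Pi.add_apply, Pi.sub_apply]; ring
  have hqE : ∀ j, ∫ y, ((y j) ^ 2 - 1) ^ 2 ∂μ ≤ C := by
    intro j
    have : ∫ y, ((y j) ^ 2 - 1) ^ 2 ∂μ = ∫ y, (1 * (y j) ^ 4 + (-2) * (y j * y j) + 1 * 1) ∂μ := by
      congr 1; funext y; ring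
    rw [this, int3 μ _ _ _ 1 (-2) 1 (h4 j) (h2 j j) (integrable_const 1), h2']
    have := h4' j
    simp
    linarith
  have hBI : Integrable (fun ω => (p : ℝ) * ∑ j, ((ω κ j) ^ 2 - 1) ^ 2) P :=
    (integrable_finsetSum _ fun j _ => cI κ _ (hqI j)).const_mul _
  have hBE : ∫ ω, (p : ℝ) * ∑ j, ((ω κ j) ^ 2 - 1) ^ 2 ∂P ≤ n * p * C := by
    rw [integral_const_mul, integral_finsetSum _ fun j _ => cI κ _ (hqI j)]
    have : ∑ j : Fin p, ∫ ω, ((ω κ j) ^ 2 - 1) ^ 2 ∂P ≤ ∑ j : Fin p, C :=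
      Finset.sum_le_sum fun j _ => by rw [cE κ _ (hqI j)]; exact hqE j
    have h5 : ∑ j : Fin p, C = p * C := by simp
    rw [h5] at this
    have hpn' : (p : ℝ) ≤ n := by exact_mod_cast hpn
    calc _ ≤ (p : ℝ) * (p * C) := by gcongr
      _ ≤ n * (p * C) := by gcongr
      _ = _ := by ring
  have hBle : ∀ ω : Fin n → Fin p → ℝ,
      (∑ j, (if j ∈ γ then (0:ℝ) else 1) * ((ω κ j) ^ 2 - 1)) ^ 2
        ≤ (p : ℝ) * ∑ j, ((ω κ j) ^ 2 - 1) ^ 2 := by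
    intro ω
    calc _ ≤ ((Finset.univ : Finset (Fin p)).card : ℝ) *
          ∑ j, ((if j ∈ γ then (0:ℝ) else 1) * ((ω κ j) ^ 2 - 1)) ^ 2 :=
          sq_sum_le_card_mul_sum_sq
      _ ≤ _ := by
        rw [Finset.card_univ, Fintype.card_fin]
        refine mul_le_mul_of_nonneg_left (Finset.sum_le_sum fun j _ => ?_) (Nat.cast_nonneg _)
        split_ifs
        · rw [zero_mul, zero_pow two_ne_zero]; positivity
        · rw [one_mul]
  have hfin : ∫ ω, (quadStat n p γ G (k + 1) ω - quadStat n p γ G k ω) ^ 2 ∂P ≤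
      ∫ ω, (12 * (∑ j, (if j ∈ γ then (0:ℝ) else 1) * (partialSumVec n p k ω j * ω κ j)) ^ 2
        + 3 * ((p : ℝ) * ∑ j, ((ω κ j) ^ 2 - 1) ^ 2)
        + 12 * (n : ℝ) ^ 2 * (∑ j, G j * ω κ j) ^ 2) ∂P := by
    refine integral_mono_of_nonneg (Eventually.of_forall fun ω => sq_nonneg _)
      (((hA.1.const_mul 12).add (hBI.const_mul 3)).add (hE.1.const_mul _))
      (Eventually.of_forall fun ω => ?_)
    dsimp only
    rw [diff_eq n p k hk]
    have := hBle ω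
    have key : ∀ a b e N B : ℝ, b ^ 2 ≤ B →
        (2 * a + b + 2 * N * e) ^ 2 ≤ 12 * a ^ 2 + 3 * B + 12 * N ^ 2 * e ^ 2 := by
      intro a b e N B h
      nlinarith [sq_nonneg (2 * a - b), sq_nonneg (2 * a - 2 * N * e), sq_nonneg (b - 2 * N * e)]
    exact key _ _ _ _ _ this
  refine hfin.trans ?_
  rw [int3 P _ _ _ 12 3 (12 * (n : ℝ) ^ 2) hA.1 hBI hE.1, hE.2]
  simp only [mul_one]
  have hG : 0 ≤ C * ((n : ℝ) ^ 2 * ∑ j, (G j) ^ 2) := by positivity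
  nlinarith

/-- **Second-moment bound in the proof of Lemma 3**: for i.i.d. mean-zero,
identity-covariance random vectors in `ℝ^p` (`p ≤ n`) with coordinatewise fourth moments
bounded by `C`, the martingale differences `D_k = S_k − S_{k-1}` satisfy
`Σ_{k=1}^n E[D_k²] ≤ C'(n²p + n³‖G‖²)` for a constant `C'` depending only on `C`. -/
theorem sum_sq_martingale_differences_bound (C : ℝ) (hC : 0 ≤ C) :
    ∃ C' : ℝ, 0 < C' ∧
      ∀ (n p : ℕ), 0 < p → p ≤ n →
      ∀ (μ : Measure (Fin p → ℝ)), IsProbabilityMeasure μ →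
      (∀ j, Integrable (fun y => y j) μ) →
      (∀ j, ∫ y, y j ∂μ = 0) →
      (∀ j l, Integrable (fun y => y j * y l) μ) →
      (∀ j l, ∫ y, y j * y l ∂μ = if j = l then (1 : ℝ) else 0) →
      (∀ j, Integrable (fun y => (y j) ^ 4) μ) →
      (∀ j, ∫ y, (y j) ^ 4 ∂μ ≤ C) →
      ∀ (γ : Finset (Fin p)) (G : Fin p → ℝ),
        (∑ k ∈ Finset.range n,
            ∫ ω, (quadStat n p γ G (k + 1) ω - quadStat n p γ G k ω) ^ 2
              ∂(Measure.pi fun _ : Fin n => μ))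
          ≤ C' * ((n : ℝ) ^ 2 * p + (n : ℝ) ^ 3 * ∑ j, (G j) ^ 2) := by
  refine ⟨12 + 3 * C, by positivity, ?_⟩
  intro n p _ hpn μ hμ h1 h1' h2 h2' h4 h4' γ G
  calc _ ≤ ∑ k ∈ Finset.range n,
        (12 + 3 * C) * (n * p + (n : ℝ) ^ 2 * ∑ j, (G j) ^ 2) :=
        Finset.sum_le_sum fun k hk =>
          one_bound C hC n p k hpn (Finset.mem_range.1 hk) μ h1 h1' h2 h2' h4 h4' γ G
    _ = _ := by
      rw [Finset.sum_const, Finset.card_range, nsmul_eq_mul]; ring
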